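/- Let N ≥ 2, c > 0, and let D be a nonempty convex set of Borel probability measures on [0,1]^N. Let ℓ_1, ℓ_2, … be a semi-adversarial loss sequence constrained by D and let (w_t) be the FTRL-CARL weights with parameter c (so w_t depends only on ℓ_1,…,ℓ_{t−1}). Then for every t ∈ ℕ, every expert i ∈ [N] with Δ_i > 0, and every p > 0: E[ (w_t(i))^p ] ≤ 2·exp( −t·( p·c² / (2·(√2 + c·√p)²) )·Δ_i² ). -/

import Mathlib

open MeasureTheory ProbabilityTheory

/-- The error function `erf(z) = (2/√π)∫_0^z e^{-u²} du`. -/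
noncomputable def erf (z : ℝ) : ℝ :=
  2 / Real.sqrt Real.pi * ∫ u in (0 : ℝ)..z, Real.exp (-u ^ 2)

/-- `h_B(x) = x·√(2·log(1/x)) − √(π/2)·erf(√(log(1/x))) + x·(N−1)·√(π/2)` for `x ∈ (0,1]`,
with `h_B(0) = −√(π/2)`. -/
noncomputable def hB (N : ℕ) (x : ℝ) : ℝ :=
  if x = 0 then -Real.sqrt (Real.pi / 2)
  else x * Real.sqrt (2 * Real.log (1 / x))
    - Real.sqrt (Real.pi / 2) * erf (Real.sqrt (Real.log (1 / x)))
    + x * ((N : ℝ) - 1) * Real.sqrt (Real.pi / 2)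

noncomputable def HB {N : ℕ} (w : Fin N → ℝ) : ℝ := ∑ i, hB N (w i)

/-- FTRL-CARL with parameter `c > 0`:
`w_{t+1} ∈ argmin_{w ∈ Δ_N} { ⟨L_t, w⟩ − (√(t+1)/c)·H_B(w) }` with `L_t = Σ_{s=1}^t ℓ_s`. -/
def IsCarl (N : ℕ) (c : ℝ) (ℓ : ℕ → Fin N → ℝ) (w : ℕ → Fin N → ℝ) : Prop :=
  ∀ t : ℕ, w (t + 1) ∈ stdSimplex ℝ (Fin N) ∧
    ∀ v ∈ stdSimplex ℝ (Fin N),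
      (∑ i, (∑ s ∈ Finset.Icc 1 t, ℓ s i) * w (t + 1) i)
          - Real.sqrt ((t : ℝ) + 1) / c * HB (w (t + 1)) ≤
        (∑ i, (∑ s ∈ Finset.Icc 1 t, ℓ s i) * v i)
          - Real.sqrt ((t : ℝ) + 1) / c * HB v

/-- A semi-adversarial loss sequence constrained by `D`. -/
def IsSemiAdv {Ω : Type*} [MeasurableSpace Ω] (μ : Measure Ω) [IsFiniteMeasure μ]
    {N : ℕ} (D : Set (Measure (Fin N → ℝ))) (ℓ : ℕ → Ω → Fin N → ℝ) : Prop :=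
  (∀ t, Measurable (ℓ t)) ∧ (∀ t ω i, ℓ t ω i ∈ Set.Icc (0 : ℝ) 1) ∧
    ∀ t : ℕ, ∀ᵐ ω ∂μ,
      condDistrib (ℓ (t + 1)) (fun ω' (s : Fin t) => ℓ ((s : ℕ) + 1) ω') μ
        (fun s : Fin t => ℓ ((s : ℕ) + 1) ω) ∈ D

/-- The effective stochastic gap `Δ_i = inf_{λ∈D} max_{j∈[N]} E_{ℓ∼λ}[ℓ(i) − ℓ(j)]`. -/
noncomputable def gap {N : ℕ} (D : Set (Measure (Fin N → ℝ))) (i : Fin N) : ℝ :=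
  sInf ((fun lam => sSup (Set.range fun j : Fin N => ∫ v, (v i - v j) ∂lam)) '' D)

theorem erf_hasDerivAt (z : ℝ) :
    HasDerivAt erf (2 / Real.sqrt Real.pi * Real.exp (-z ^ 2)) z := by
  have hc : Continuous fun u : ℝ => Real.exp (-u ^ 2) := by fun_prop
  have := intervalIntegral.integral_hasDerivAt_right (hc.intervalIntegrable 0 z)
    (hc.stronglyMeasurableAtFilter _ _) hc.continuousAt
  exact this.const_mul _

theorem erf_le_one {z : ℝ} (hz : 0 ≤ z) : erf z ≤ 1 := by
  unfold erf
  have h1 := integral_gaussian_Ioi 1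
  have h2 : ∫ u in (0 : ℝ)..z, Real.exp (-u ^ 2) ≤ Real.sqrt Real.pi / 2 := by
    rw [intervalIntegral.integral_of_le hz]
    have h3 : IntegrableOn (fun x : ℝ => Real.exp (-1 * x ^ 2)) (Set.Ioi 0) :=
      (integrable_exp_neg_mul_sq one_pos).integrableOn
    have := setIntegral_mono_set h3 (Filter.Eventually.of_forall fun x => (Real.exp_pos _).le)
      (show Set.Ioc 0 z ≤ Set.Ioi 0 from Set.Ioc_subset_Ioi_self).eventuallyLE
    rw [h1] at this
    simpa using this
  have hpi : 0 < Real.sqrt Real.pi := Real.sqrt_pos.2 Real.pi_pos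
  calc _ ≤ 2 / Real.sqrt Real.pi * (Real.sqrt Real.pi / 2) := by gcongr
    _ = 1 := by field_simp

/-- The nonlinear part of `hB`. -/
noncomputable def gB (x : ℝ) : ℝ :=
  x * Real.sqrt (2 * Real.log (1 / x)) - Real.sqrt (Real.pi / 2) * erf (Real.sqrt (Real.log (1 / x)))

theorem hB_eq (N : ℕ) {x : ℝ} (hx : 0 < x) :
    hB N x = gB x + x * (((N : ℝ) - 1) * Real.sqrt (Real.pi / 2)) := by
  unfold hB gB
  rw [if_neg hx.ne']
  ring

theorem gB_hasDerivAt {x : ℝ} (hx : 0 < x) (hx1 : x < 1) :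
    HasDerivAt gB (Real.sqrt (2 * Real.log (1 / x))) x := by
  have hlog : 0 < Real.log (1 / x) := Real.log_pos (by rw [lt_div_iff₀ hx]; linarith)
  have h1 : HasDerivAt (fun x : ℝ => Real.log (1 / x)) (-x⁻¹) x := by
    have h := (Real.hasDerivAt_log hx.ne').neg
    have he : (fun x : ℝ => Real.log (1 / x)) = -Real.log := by
      funext y
      simp
    rw [he]
    exact h
  have h2 := h1.sqrt hlog.ne'
  have h3 := (erf_hasDerivAt (Real.sqrt (Real.log (1 / x)))).comp x h2
  have h4 := (h1.const_mul 2).sqrt (by positivity)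
  have h5 := ((hasDerivAt_id x).mul h4).sub (h3.const_mul (Real.sqrt (Real.pi / 2)))
  refine HasDerivAt.congr_deriv (f := gB) h5 ?_
  rw [Real.sq_sqrt hlog.le]
  have he : Real.exp (-Real.log (1 / x)) = x := by
    rw [one_div, Real.log_inv, neg_neg, Real.exp_log hx]
  rw [he, Real.sqrt_mul (by norm_num), Real.sqrt_div Real.pi_pos.le]
  have hpi : 0 < Real.sqrt Real.pi := Real.sqrt_pos.2 Real.pi_pos
  have hs : 0 < Real.sqrt (Real.log (1 / x)) := Real.sqrt_pos.2 hlog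
  have h22 : Real.sqrt 2 * Real.sqrt 2 = 2 := Real.mul_self_sqrt (by norm_num)
  have h2p : 0 < Real.sqrt 2 := by positivity
  simp only [id]
  field_simp
  ring_nf

theorem erf_continuous : Continuous erf :=
  continuous_iff_continuousAt.2 fun z => (erf_hasDerivAt z).continuousAt

theorem gB_continuousOn : ContinuousOn gB (Set.Ioi 0) := by
  have hl : ContinuousOn (fun x : ℝ => Real.log (1 / x)) (Set.Ioi 0) := by
    apply ContinuousOn.log
    · exact continuousOn_const.div continuousOn_id fun x hx => (ne_of_gt hx)
    · intro x hx
      exact (one_div_pos.2 hx).ne'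
  unfold gB
  have he := erf_continuous
  have h1 := he.comp_continuousOn hl.sqrt
  exact (continuousOn_id.mul (hl.const_mul 2).sqrt).sub (h1.const_mul _)

theorem gB_slope {a b : ℝ} (ha : 0 < a) (hab : a < b) (hb : b ≤ 1) :
    0 ≤ gB b - gB a ∧ gB b - gB a ≤ (b - a) * Real.sqrt (2 * Real.log (1 / a)) := by
  obtain ⟨x, hx, h⟩ := exists_hasDerivAt_eq_slope gB (fun x => Real.sqrt (2 * Real.log (1 / x))) hab
    (gB_continuousOn.mono fun x hx => lt_of_lt_of_le ha hx.1)
    (fun x hx => gB_hasDerivAt (ha.trans hx.1) (hx.2.trans_le hb))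
  have hba : 0 < b - a := sub_pos.2 hab
  rw [eq_div_iff hba.ne'] at h
  have hx0 : 0 < x := ha.trans hx.1
  have h2 : Real.sqrt (2 * Real.log (1 / x)) ≤ Real.sqrt (2 * Real.log (1 / a)) := by
    have : a < x := hx.1
    gcongr
  have h3 := Real.sqrt_nonneg (2 * Real.log (1 / x))
  rw [← h]
  constructor
  · positivity
  · nlinarith

theorem hB_mono (N : ℕ) {a b : ℝ} (ha : 0 ≤ a) (hab : a < b) (hb : b ≤ 1) :
    (b - a) * (((N : ℝ) - 1) * Real.sqrt (Real.pi / 2)) ≤ hB N b - hB N a := by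
  rcases ha.eq_or_lt with rfl | ha
  · rw [hB_eq N hab]
    have : hB N 0 = - Real.sqrt (Real.pi / 2) := by simp [hB]
    rw [this]
    have h1 : - Real.sqrt (Real.pi / 2) ≤ gB b := by
      unfold gB
      have := erf_le_one (Real.sqrt_nonneg (Real.log (1 / b)))
      have h2 : 0 ≤ b * Real.sqrt (2 * Real.log (1 / b)) := by positivity
      have h3 := Real.sqrt_nonneg (Real.pi / 2)
      nlinarith
    linarith
  · rw [hB_eq N ha, hB_eq N (ha.trans hab)]
    have := (gB_slope ha hab hb).1
    linarith

theorem hB_slope (N : ℕ) {a b : ℝ} (ha : 0 < a) (hab : a < b) (hb : b ≤ 1) :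
    hB N b - hB N a ≤ (b - a) * (((N : ℝ) - 1) * Real.sqrt (Real.pi / 2))
      + (b - a) * Real.sqrt (2 * Real.log (1 / a)) := by
  rw [hB_eq N ha, hB_eq N (ha.trans hab)]
  have := (gB_slope ha hab hb).2
  linarith

theorem sum_update2 {N : ℕ} (F : Fin N → ℝ → ℝ) (w : Fin N → ℝ) {i j : Fin N} (hij : i ≠ j)
    (a b : ℝ) :
    ∑ k, F k (Function.update (Function.update w i a) j b k) =
      ∑ k, F k (w k) + (F i a - F i (w i)) + (F j b - F j (w j)) := by
  have h : ∀ k, F k (Function.update (Function.update w i a) j b k) =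
      F k (w k) + (if k = i then F i a - F i (w i) else 0)
        + (if k = j then F j b - F j (w j) else 0) := by
    intro k
    by_cases h1 : k = j
    · subst h1
      simp [hij.symm]
    · by_cases h2 : k = i
      · subst h2
        simp [hij]
      · simp [h1, h2]
  simp only [h, Finset.sum_add_distrib, Finset.sum_ite_eq', Finset.mem_univ, if_true]

/-- The KKT consequence. -/
theorem carl_kkt {N : ℕ} (L : Fin N → ℝ) {η : ℝ} (hη : 0 < η) {w : Fin N → ℝ}
    (hw : w ∈ stdSimplex ℝ (Fin N))
    (hmin : ∀ v ∈ stdSimplex ℝ (Fin N), (∑ k, L k * w k) - η * HB w ≤ (∑ k, L k * v k) - η * HB v)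
    (i j : Fin N) (hi : 0 < w i) :
    L i - L j ≤ η * Real.sqrt (2 * Real.log (1 / w i)) := by
  by_cases hij : i = j
  · subst hij
    simp only [sub_self]
    positivity
  have hsum : w i + w j ≤ 1 := by
    rw [← hw.2]
    have := Finset.sum_le_sum_of_subset_of_nonneg (f := w) (Finset.subset_univ ({i, j} : Finset (Fin N)))
      (fun k _ _ => hw.1 k)
    rwa [Finset.sum_pair hij] at this
  have hj := hw.1 j
  -- bound for each δ
  have key : ∀ x ∈ Set.Ioo 0 (w i), L i - L j ≤ η * Real.sqrt (2 * Real.log (1 / x)) := by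
    intro x hx
    obtain ⟨hx0, hx1⟩ := hx
    set v := Function.update (Function.update w i x) j (w j + (w i - x)) with hv
    have hvS : v ∈ stdSimplex ℝ (Fin N) := by
      constructor
      · intro k
        by_cases h1 : k = j
        · subst h1
          simp only [hv, Function.update_self]
          linarith
        · by_cases h2 : k = i
          · subst h2
            simp only [hv, Function.update_of_ne h1, Function.update_self]
            linarith
          · simp only [hv, Function.update_of_ne h1, Function.update_of_ne h2]
            exact hw.1 k
      · have := sum_update2 (fun _ y => y) w hij x (w j + (w i - x))
        rw [hv]
        rw [this, hw.2]
        ring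
    have h := hmin v hvS
    have e1 := sum_update2 (fun k y => L k * y) w hij x (w j + (w i - x))
    have e2 := sum_update2 (fun _ y => hB N y) w hij x (w j + (w i - x))
    rw [← hv] at e1 e2
    unfold HB at h
    rw [e1, e2] at h
    have m1 := hB_slope N hx0 hx1 (by linarith)
    have m2 := hB_mono N hj (show w j < w j + (w i - x) by linarith) (by linarith)
    have hd : 0 < w i - x := by linarith
    have m3 : (hB N (w i) - hB N x) - (hB N (w j + (w i - x)) - hB N (w j)) ≤
        (w i - x) * Real.sqrt (2 * Real.log (1 / x)) := by linarith
    have m4 := mul_le_mul_of_nonneg_left m3 hη.le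
    have m5 : (w i - x) * (L i - L j) ≤ (w i - x) * (η * Real.sqrt (2 * Real.log (1 / x))) := by
      linarith
    exact le_of_mul_le_mul_left m5 hd
  have hcont : ContinuousAt (fun x : ℝ => η * Real.sqrt (2 * Real.log (1 / x))) (w i) := by
    have h1 : ContinuousAt (fun x : ℝ => 1 / x) (w i) := continuousAt_const.div continuousAt_id hi.ne'
    exact continuousAt_const.mul (continuousAt_const.mul (h1.log (one_div_pos.2 hi).ne')).sqrt
  have ht := hcont.tendsto.mono_left (nhdsWithin_le_nhds (s := Set.Iio (w i)))
  refine ge_of_tendsto ht ?_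
  filter_upwards [Ioo_mem_nhdsLT hi] with x hx using key x hx

/-- The pointwise bound on the power of a weight. -/
theorem weight_pow_le {N : ℕ} (L : Fin N → ℝ) {t c p lam : ℝ} (ht : 0 < t) (hc : 0 < c) (hp : 0 < p)
    (hlam : 0 ≤ lam) {w : Fin N → ℝ}
    (hw : w ∈ stdSimplex ℝ (Fin N))
    (hmin : ∀ v ∈ stdSimplex ℝ (Fin N), (∑ k, L k * w k) - Real.sqrt t / c * HB w
      ≤ (∑ k, L k * v k) - Real.sqrt t / c * HB v)
    (q : Fin N → ℝ) (hq : q ∈ stdSimplex ℝ (Fin N)) (i : Fin N) :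
    w i ^ p ≤ Real.exp (lam ^ 2 * t / (2 * (p * c ^ 2)) - lam * (L i - ∑ j, q j * L j)) := by
  rcases (hw.1 i).eq_or_lt with h0 | h0
  · rw [← h0, Real.zero_rpow hp.ne']
    positivity
  have hη : 0 < Real.sqrt t / c := by positivity
  set Y := Real.sqrt t / c * Real.sqrt (2 * Real.log (1 / w i)) with hY
  have hX : L i - ∑ j, q j * L j ≤ Y := by
    have : L i - ∑ j, q j * L j = ∑ j, q j * (L i - L j) := by
      simp only [mul_sub, Finset.sum_sub_distrib, ← Finset.sum_mul, hq.2, one_mul]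
    rw [this]
    calc _ ≤ ∑ j, q j * Y := Finset.sum_le_sum fun j _ =>
          mul_le_mul_of_nonneg_left (carl_kkt L hη hw hmin i j h0) (hq.1 j)
      _ = Y := by rw [← Finset.sum_mul, hq.2, one_mul]
  have hwi1 : w i ≤ 1 := by
    rw [← hw.2]
    exact Finset.single_le_sum (fun k _ => hw.1 k) (Finset.mem_univ i)
  have hlog : 0 ≤ Real.log (1 / w i) := Real.log_nonneg (by rw [le_div_iff₀ h0]; linarith)
  have hY2 : Y ^ 2 = t / c ^ 2 * (2 * Real.log (1 / w i)) := by
    rw [hY, mul_pow, div_pow, Real.sq_sqrt ht.le, Real.sq_sqrt (by positivity)]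
  have hlogw : Real.log (w i) = - (c ^ 2 * Y ^ 2 / (2 * t)) := by
    rw [hY2, one_div, Real.log_inv]
    field_simp
  rw [Real.rpow_def_of_pos h0]
  apply Real.exp_le_exp.2
  rw [hlogw]
  have h1 : lam * (L i - ∑ j, q j * L j) ≤ lam * Y := mul_le_mul_of_nonneg_left hX hlam
  have h2 : 0 ≤ (lam * t - p * c ^ 2 * Y) ^ 2 / (2 * (p * c ^ 2) * t) := by positivity
  have h3 : (lam * t - p * c ^ 2 * Y) ^ 2 / (2 * (p * c ^ 2) * t) =
      lam ^ 2 * t / (2 * (p * c ^ 2)) - lam * Y + c ^ 2 * Y ^ 2 / (2 * t) * p := by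
    field_simp
    ring
  linarith

theorem integrable_coord {N : ℕ} {lam : Measure (Fin N → ℝ)} [IsProbabilityMeasure lam]
    (h : ∀ᵐ v ∂lam, ∀ i, v i ∈ Set.Icc (0 : ℝ) 1) (i : Fin N) :
    Integrable (fun v : Fin N → ℝ => v i) lam :=
  Integrable.of_mem_Icc 0 1 (measurable_pi_apply i).aemeasurable (h.mono fun _ hv => hv i)

theorem gap_le {N : ℕ} {D : Set (Measure (Fin N → ℝ))} (i : Fin N) {lam : Measure (Fin N → ℝ)}
    (hlam : lam ∈ D) {x : ℝ} (h : ∀ j : Fin N, ∫ v, (v i - v j) ∂lam ≤ x) : gap D i ≤ x := by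
  have hb : BddBelow ((fun lam => sSup (Set.range fun j : Fin N => ∫ v, (v i - v j) ∂lam)) '' D) := by
    refine ⟨0, ?_⟩
    rintro _ ⟨l, _, rfl⟩
    refine le_csSup_of_le (Set.finite_range _).bddAbove ⟨i, rfl⟩ ?_
    simp
  refine (csInf_le hb ⟨lam, hlam, rfl⟩).trans ?_
  have : Nonempty (Fin N) := ⟨i⟩
  refine csSup_le (Set.range_nonempty _) ?_
  rintro _ ⟨j, rfl⟩
  exact h j

theorem gap_le_one {N : ℕ} {D : Set (Measure (Fin N → ℝ))} (hD : D.Nonempty)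
    (hDprob : ∀ lam ∈ D, IsProbabilityMeasure lam ∧ ∀ᵐ v ∂lam, ∀ i, v i ∈ Set.Icc (0 : ℝ) 1)
    (i : Fin N) : gap D i ≤ 1 := by
  obtain ⟨lam, hlam⟩ := hD
  obtain ⟨h1, h2⟩ := hDprob lam hlam
  refine gap_le i hlam fun j => ?_
  calc ∫ v, (v i - v j) ∂lam ≤ ∫ _v, (1 : ℝ) ∂lam := by
        refine integral_mono_ae ((integrable_coord h2 i).sub (integrable_coord h2 j))
          (integrable_const _) ?_
        filter_upwards [h2] with v hv
        have := (hv i).2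
        have := (hv j).1
        linarith
    _ = 1 := by simp

theorem exists_mix {N : ℕ} {D : Set (Measure (Fin N → ℝ))} (hD : D.Nonempty)
    (hDprob : ∀ lam ∈ D, IsProbabilityMeasure lam ∧ ∀ᵐ v ∂lam, ∀ i, v i ∈ Set.Icc (0 : ℝ) 1)
    (hDconv : ∀ lam₁ ∈ D, ∀ lam₂ ∈ D, ∀ a : ENNReal, a ≤ 1 →
      a • lam₁ + (1 - a) • lam₂ ∈ D) (i : Fin N) :
    ∃ q ∈ stdSimplex ℝ (Fin N), ∀ lam ∈ D,
      gap D i ≤ ∫ v : Fin N → ℝ, (v i - ∑ j, q j * v j) ∂lam := by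
  set V : Measure (Fin N → ℝ) → Fin N → ℝ := fun lam j => ∫ v, (v i - v j) ∂lam with hV
  set G := gap D i with hG
  have hS1 : Convex ℝ (Set.pi Set.univ fun _ : Fin N => Set.Iio G) :=
    convex_pi fun _ _ => convex_Iio G
  have hS2 : IsOpen (Set.pi Set.univ fun _ : Fin N => Set.Iio G) :=
    isOpen_set_pi Set.finite_univ fun _ _ => isOpen_Iio
  have hint : ∀ lam ∈ D, ∀ j, Integrable (fun v : Fin N → ℝ => v i - v j) lam := by
    intro lam hlam j
    obtain ⟨h1, h2⟩ := hDprob lam hlam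
    exact (integrable_coord h2 i).sub (integrable_coord h2 j)
  have hC : Convex ℝ (V '' D) := by
    rintro _ ⟨l1, h1, rfl⟩ _ ⟨l2, h2, rfl⟩ a b ha hb hab
    have ha1 : ENNReal.ofReal a ≤ 1 := by
      rw [← ENNReal.ofReal_one]
      exact ENNReal.ofReal_le_ofReal (by linarith)
    refine ⟨_, hDconv l1 h1 l2 h2 (ENNReal.ofReal a) ha1, ?_⟩
    have hb1 : 1 - ENNReal.ofReal a = ENNReal.ofReal b := by
      rw [← ENNReal.ofReal_one, ← ENNReal.ofReal_sub _ ha]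
      congr 1
      linarith
    funext j
    simp only [hV, hb1]
    rw [integral_add_measure ((hint l1 h1 j).smul_measure ENNReal.ofReal_ne_top)
      ((hint l2 h2 j).smul_measure ENNReal.ofReal_ne_top), integral_smul_measure,
      integral_smul_measure, ENNReal.toReal_ofReal ha, ENNReal.toReal_ofReal hb]
    rfl
  have hdisj : Disjoint (Set.pi Set.univ fun _ : Fin N => Set.Iio G) (V '' D) := by
    rw [Set.disjoint_left]
    rintro _ hx ⟨lam, hlam, rfl⟩
    have hne : (Finset.univ : Finset (Fin N)).Nonempty := ⟨i, Finset.mem_univ i⟩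
    obtain ⟨j, _, hj⟩ := Finset.exists_max_image Finset.univ (V lam) hne
    have := gap_le i hlam (x := V lam j) fun k => hj k (Finset.mem_univ k)
    exact absurd (hx j (Set.mem_univ j)) (not_lt.2 this)
  obtain ⟨f, u, hf1, hf2⟩ := geometric_hahn_banach_open hS1 hS2 hC hdisj
  set q : Fin N → ℝ := fun j => f (Pi.single j 1) with hq
  have hf : ∀ x : Fin N → ℝ, f x = ∑ j, x j * q j := by
    intro x
    have := LinearMap.pi_apply_eq_sum_univ (f : (Fin N → ℝ) →ₗ[ℝ] ℝ) x
    simp only [ContinuousLinearMap.coe_coe, smul_eq_mul] at this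
    rw [this]
    refine Finset.sum_congr rfl fun j _ => ?_
    congr 2
    funext k
    simp [Pi.single_apply, eq_comm]
  set Q := ∑ j, q j with hQ
  have hq0 : ∀ j, 0 ≤ q j := by
    intro j
    by_contra! hneg
    have hb : ∀ K : ℝ, 0 ≤ K → (G - 1) * Q - K * q j < u := by
      intro K hK
      have := hf1 (fun k => (G - 1) - K * (if k = j then 1 else 0)) (by
        intro k _
        simp only [Set.mem_Iio]
        split_ifs <;> linarith)
      rw [hf] at this
      simp only [sub_mul, Finset.sum_sub_distrib, ← Finset.mul_sum, mul_assoc, ite_mul, one_mul,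
        zero_mul, Finset.sum_ite_eq', Finset.mem_univ, if_true] at this
      rw [← hQ] at this
      linarith
    have h1 := hb ((|u - (G - 1) * Q|) / (-q j)) (by
      have : 0 < -q j := by linarith
      positivity)
    have h2 : (|u - (G - 1) * Q|) / (-q j) * q j = - |u - (G - 1) * Q| := by
      have : q j ≠ 0 := hneg.ne
      field_simp
    rw [h2] at h1
    have := le_abs_self (u - (G - 1) * Q)
    linarith
  have hε : ∀ ε : ℝ, 0 < ε → (G - ε) * Q < u := by
    intro ε he
    have := hf1 (fun _ => G - ε) (by
      intro k _
      simp only [Set.mem_Iio]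
      linarith)
    rw [hf, ← Finset.mul_sum] at this
    exact this
  have hQ0 : 0 < Q := by
    rcases (Finset.sum_nonneg fun j (_ : j ∈ Finset.univ) => hq0 j).eq_or_lt with h | h
    · exfalso
      have hz := (Finset.sum_eq_zero_iff_of_nonneg fun j _ => hq0 j).1 h.symm
      obtain ⟨lam, hlam⟩ := hD
      have h1 := hf2 _ ⟨lam, hlam, rfl⟩
      rw [hf, Finset.sum_eq_zero fun j hj => by rw [hz j hj, mul_zero]] at h1
      have h2 := hε 1 one_pos
      rw [hQ, ← h, mul_zero] at h2
      linarith
    · exact h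
  have hGu : G * Q ≤ u := by
    by_contra! hlt
    have h1 := hε ((G * Q - u) / Q) (div_pos (by linarith) hQ0)
    rw [sub_mul, div_mul_cancel₀ _ hQ0.ne'] at h1
    linarith
  refine ⟨fun j => q j / Q, ⟨fun j => div_nonneg (hq0 j) hQ0.le, ?_⟩, ?_⟩
  · rw [← Finset.sum_div, ← hQ, div_self hQ0.ne']
  · intro lam hlam
    have h1 := hGu.trans (hf2 _ ⟨lam, hlam, rfl⟩)
    rw [hf] at h1
    have h2 : ∀ v : Fin N → ℝ, v i - ∑ j, q j / Q * v j = ∑ j, q j / Q * (v i - v j) := by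
      intro v
      simp only [mul_sub, Finset.sum_sub_distrib, ← Finset.sum_mul, ← Finset.sum_div]
      rw [← hQ, div_self hQ0.ne', one_mul]
    simp only [h2]
    rw [integral_finsetSum _ fun j _ => (hint lam hlam j).const_mul _]
    simp only [integral_const_mul]
    rw [← mul_le_mul_iff_left₀ hQ0]
    refine h1.trans (le_of_eq ?_)
    rw [Finset.sum_mul]
    refine Finset.sum_congr rfl fun j _ => ?_
    simp only [hV]
    field_simp

theorem hoeffding_step {N : ℕ} {lam : Measure (Fin N → ℝ)} [IsProbabilityMeasure lam]
    {φ : (Fin N → ℝ) → ℝ} (hφ : Measurable φ) (hb : ∀ᵐ v ∂lam, φ v ∈ Set.Icc (-1 : ℝ) 1)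
    {G θ : ℝ} (hG : G ≤ ∫ v, φ v ∂lam) (hθ : 0 ≤ θ) :
    ∫⁻ v, ENNReal.ofReal (Real.exp (-θ * φ v)) ∂lam
      ≤ ENNReal.ofReal (Real.exp (-θ * G + θ ^ 2 / 2)) := by
  have hs := hasSubgaussianMGF_of_mem_Icc hφ.aemeasurable hb
  set m := ∫ v, φ v ∂lam with hm
  have h1 := hs.mgf_le (-θ)
  have h2 := hs.integrable_exp_mul (-θ)
  unfold mgf at h1
  have hc : (((‖(1 : ℝ) - (-1)‖₊ / 2) ^ 2 : NNReal) : ℝ) = 1 := by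
    have : ‖(1 : ℝ) - (-1)‖ = 2 := by norm_num
    push_cast
    rw [this]
    norm_num
  rw [hc] at h1
  have he : ∀ v, Real.exp (-θ * φ v) = Real.exp (-θ * m) * Real.exp (-θ * (φ v - m)) := by
    intro v
    rw [← Real.exp_add]
    congr 1
    ring
  have hint : Integrable (fun v => Real.exp (-θ * φ v)) lam := by
    simp only [he]
    exact h2.const_mul _
  rw [← ofReal_integral_eq_lintegral_ofReal hint (Filter.Eventually.of_forall fun v => (Real.exp_pos _).le)]
  apply ENNReal.ofReal_le_ofReal
  simp only [he]
  rw [integral_const_mul]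
  calc _ ≤ Real.exp (-θ * m) * Real.exp (1 * (-θ) ^ 2 / 2) :=
        mul_le_mul_of_nonneg_left h1 (Real.exp_pos _).le
    _ = Real.exp (-θ * m + θ ^ 2 / 2) := by rw [← Real.exp_add]; congr 1; ring
    _ ≤ _ := by
      apply Real.exp_le_exp.2
      nlinarith

theorem mgf_bound {Ω : Type*} [MeasurableSpace Ω] (μ : Measure Ω) [IsProbabilityMeasure μ]
    {N : ℕ} {D : Set (Measure (Fin N → ℝ))} {ℓ : ℕ → Ω → Fin N → ℝ} (hsa : IsSemiAdv μ D ℓ)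
    {φ : (Fin N → ℝ) → ℝ} (hφ : Measurable φ) {θ : ℝ} {B : ENNReal}
    (hB : ∀ lam ∈ D, ∫⁻ v, ENNReal.ofReal (Real.exp (-θ * φ v)) ∂lam ≤ B) (n : ℕ) :
    ∫⁻ ω, ENNReal.ofReal (Real.exp (-θ * ∑ s ∈ Finset.Icc 1 n, φ (ℓ s ω))) ∂μ ≤ B ^ n := by
  obtain ⟨hm, -, hD⟩ := hsa
  induction n with
  | zero => simp
  | succ n ih =>
    set F : Ω → Fin n → Fin N → ℝ := fun ω s => ℓ ((s : ℕ) + 1) ω with hF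
    have hFm : Measurable F := measurable_pi_lambda _ fun s => hm _
    set A : (Fin n → Fin N → ℝ) → ENNReal :=
      fun x => ENNReal.ofReal (Real.exp (-θ * ∑ s, φ (x s))) with hA
    set E : (Fin N → ℝ) → ENNReal := fun v => ENNReal.ofReal (Real.exp (-θ * φ v)) with hE
    have hAm : Measurable A := by
      refine ENNReal.measurable_ofReal.comp (Real.measurable_exp.comp (Measurable.const_mul ?_ _))
      exact Finset.measurable_sum _ fun s _ => hφ.comp (measurable_pi_apply s)
    have hEm : Measurable E :=
      ENNReal.measurable_ofReal.comp (Real.measurable_exp.comp (hφ.const_mul _))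
    have hsum : ∀ ω, ∑ s ∈ Finset.Icc 1 n, φ (ℓ s ω) = ∑ s : Fin n, φ (F ω s) := by
      intro ω
      rw [Fin.sum_univ_eq_sum_range (fun s => φ (ℓ (s + 1) ω)) n, Finset.range_eq_Ico,
        Finset.sum_Ico_add' (fun s => φ (ℓ s ω)) 0 n 1]
      rfl
    have hAF : ∀ ω, ENNReal.ofReal (Real.exp (-θ * ∑ s ∈ Finset.Icc 1 n, φ (ℓ s ω))) = A (F ω) := by
      intro ω
      rw [hsum]
    have hsplit : ∀ ω, ENNReal.ofReal (Real.exp (-θ * ∑ s ∈ Finset.Icc 1 (n + 1), φ (ℓ s ω)))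
        = A (F ω) * E (ℓ (n + 1) ω) := by
      intro ω
      rw [← hAF, hE, ← ENNReal.ofReal_mul (Real.exp_pos _).le, ← Real.exp_add,
        Finset.sum_Icc_succ_top (by omega), mul_add]
    have hf : Measurable fun z : (Fin n → Fin N → ℝ) × (Fin N → ℝ) => A z.1 * E z.2 :=
      (hAm.comp measurable_fst).mul (hEm.comp measurable_snd)
    calc _ = ∫⁻ ω, A (F ω) * E (ℓ (n + 1) ω) ∂μ := lintegral_congr hsplit
      _ = ∫⁻ z, A z.1 * E z.2 ∂(μ.map fun ω => (F ω, ℓ (n + 1) ω)) := by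
        rw [lintegral_map hf (hFm.prodMk (hm _))]
      _ = ∫⁻ x, ∫⁻ y, A x * E y ∂(condDistrib (ℓ (n + 1)) F μ x) ∂(μ.map F) := by
        rw [← compProd_map_condDistrib (hm (n + 1)).aemeasurable, Measure.lintegral_compProd hf]
      _ = ∫⁻ x, A x * ∫⁻ y, E y ∂(condDistrib (ℓ (n + 1)) F μ x) ∂(μ.map F) := by
        refine lintegral_congr fun x => ?_
        rw [lintegral_const_mul _ hEm]
      _ = ∫⁻ ω, A (F ω) * ∫⁻ y, E y ∂(condDistrib (ℓ (n + 1)) F μ (F ω)) ∂μ := by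
        exact lintegral_map (hAm.mul (hEm.lintegral_kernel)) hFm
      _ ≤ ∫⁻ ω, A (F ω) * B ∂μ := by
        refine lintegral_mono_ae ?_
        filter_upwards [hD n] with ω hω
        exact mul_le_mul_right (hB _ hω) _
      _ = (∫⁻ ω, A (F ω) ∂μ) * B := lintegral_mul_const _ (hAm.comp hFm)
      _ ≤ B ^ n * B := by
        refine mul_le_mul_left ?_ _
        simpa only [hAF] using ih
      _ = B ^ (n + 1) := (pow_succ _ _).symm

/-- for a semi-adversarial loss sequence constrained by `D` and FTRL-CARL
weights with parameter `c`, for every round `t ≥ 1`, expert `i` with `Δ_i > 0`, and `p > 0`: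
`E[(w_t(i))^p] ≤ 2·exp(−t·(p·c²/(2·(√2 + c·√p)²))·Δ_i²)`. -/
theorem stmt15 {Ω : Type*} [MeasurableSpace Ω] (μ : Measure Ω) [IsProbabilityMeasure μ]
    (N : ℕ) (hN : 2 ≤ N) (c : ℝ) (hc : 0 < c)
    (D : Set (Measure (Fin N → ℝ))) (hD : D.Nonempty)
    (hDprob : ∀ lam ∈ D, IsProbabilityMeasure lam ∧ ∀ᵐ v ∂lam, ∀ i, v i ∈ Set.Icc (0 : ℝ) 1)
    (hDconv : ∀ lam₁ ∈ D, ∀ lam₂ ∈ D, ∀ a : ENNReal, a ≤ 1 →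
      a • lam₁ + (1 - a) • lam₂ ∈ D)
    (ℓ : ℕ → Ω → Fin N → ℝ) (hsa : IsSemiAdv μ D ℓ)
    (w : ℕ → Ω → Fin N → ℝ) (hwmeas : ∀ t, Measurable (w t))
    (hwadapt : ∀ t (ω ω' : Ω), (∀ s, 1 ≤ s → s ≤ t → ℓ s ω = ℓ s ω') →
      w (t + 1) ω = w (t + 1) ω')
    (hcarl : ∀ ω, IsCarl N c (fun t => ℓ t ω) (fun t => w t ω))
    (t : ℕ) (ht : 1 ≤ t) (i : Fin N) (hi : 0 < gap D i) (p : ℝ) (hp : 0 < p) :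
    ∫ ω, w t ω i ^ p ∂μ ≤
      2 * Real.exp (-(t : ℝ) * (p * c ^ 2 / (2 * (Real.sqrt 2 + c * Real.sqrt p) ^ 2))
        * gap D i ^ 2) := by
  obtain ⟨n, rfl⟩ : ∃ n, t = n + 1 := ⟨t - 1, by omega⟩
  obtain ⟨q, hq, hmix⟩ := exists_mix hD hDprob hDconv i
  have hG1 := gap_le_one hD hDprob i
  set G := gap D i with hG
  set b := p * c ^ 2 with hb
  have hb0 : 0 < b := by positivity
  set θ := G * b / (1 + b) with hθ
  have hθ0 : 0 ≤ θ := by positivity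
  set φ : (Fin N → ℝ) → ℝ := fun v => v i - ∑ j, q j * v j with hφdef
  have hφ : Measurable φ := by
    refine (measurable_pi_apply i).sub ?_
    exact Finset.measurable_sum _ fun j _ => (measurable_pi_apply j).const_mul _
  have hφb : ∀ v : Fin N → ℝ, (∀ k, v k ∈ Set.Icc (0 : ℝ) 1) → φ v ∈ Set.Icc (-1 : ℝ) 1 := by
    intro v hv
    have h1 : 0 ≤ ∑ j, q j * v j := Finset.sum_nonneg fun j _ => mul_nonneg (hq.1 j) (hv j).1
    have h2 : ∑ j, q j * v j ≤ 1 := by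
      rw [← hq.2]
      exact Finset.sum_le_sum fun j _ => mul_le_of_le_one_right (hq.1 j) (hv j).2
    have h3 := hv i
    simp only [hφdef]
    exact ⟨by linarith [h3.1], by linarith [h3.2]⟩
  have hstep : ∀ lam ∈ D, ∫⁻ v, ENNReal.ofReal (Real.exp (-θ * φ v)) ∂lam
      ≤ ENNReal.ofReal (Real.exp (-θ * G + θ ^ 2 / 2)) := by
    intro lam hlam
    obtain ⟨h1, h2⟩ := hDprob lam hlam
    exact hoeffding_step hφ (h2.mono hφb) (hmix lam hlam) hθ0
  have hmgf := mgf_bound μ hsa hφ hstep n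
  set K := θ ^ 2 * ((n : ℝ) + 1) / (2 * b) with hK
  have hpt : ∀ ω, w (n + 1) ω i ^ p ≤
      Real.exp K * Real.exp (-θ * ∑ s ∈ Finset.Icc 1 n, φ (ℓ s ω)) := by
    intro ω
    obtain ⟨hw, hmin⟩ := hcarl ω n
    have h := weight_pow_le (fun k => ∑ s ∈ Finset.Icc 1 n, ℓ s ω k) (t := (n : ℝ) + 1)
      (by positivity) hc hp hθ0 hw hmin q hq i
    refine h.trans (le_of_eq ?_)
    rw [← Real.exp_add]
    congr 1
    have : ∑ s ∈ Finset.Icc 1 n, φ (ℓ s ω) = (∑ s ∈ Finset.Icc 1 n, ℓ s ω i)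
        - ∑ j, q j * ∑ s ∈ Finset.Icc 1 n, ℓ s ω j := by
      simp only [hφdef, Finset.sum_sub_distrib, Finset.mul_sum]
      rw [Finset.sum_comm]
    rw [this]
    ring
  have hw0 : ∀ ω, 0 ≤ w (n + 1) ω i := fun ω => (hcarl ω n).1.1 i
  have hfin : ∫ ω, w (n + 1) ω i ^ p ∂μ ≤
      Real.exp (K + n * (-θ * G + θ ^ 2 / 2)) := by
    rw [integral_eq_lintegral_of_nonneg_ae
      (Filter.Eventually.of_forall fun ω => Real.rpow_nonneg (hw0 ω) p)
      (((measurable_pi_apply i).comp (hwmeas (n + 1))).pow_const p).aestronglyMeasurable]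
    refine ENNReal.toReal_le_of_le_ofReal (Real.exp_pos _).le ?_
    calc _ ≤ ∫⁻ ω, ENNReal.ofReal (Real.exp K) *
          ENNReal.ofReal (Real.exp (-θ * ∑ s ∈ Finset.Icc 1 n, φ (ℓ s ω))) ∂μ := by
          refine lintegral_mono fun ω => ?_
          rw [← ENNReal.ofReal_mul (Real.exp_pos _).le]
          exact ENNReal.ofReal_le_ofReal (hpt ω)
      _ = ENNReal.ofReal (Real.exp K) *
          ∫⁻ ω, ENNReal.ofReal (Real.exp (-θ * ∑ s ∈ Finset.Icc 1 n, φ (ℓ s ω))) ∂μ :=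
          lintegral_const_mul' _ _ ENNReal.ofReal_ne_top
      _ ≤ ENNReal.ofReal (Real.exp K) * ENNReal.ofReal (Real.exp (-θ * G + θ ^ 2 / 2)) ^ n := by
          gcongr
      _ = _ := by
          rw [← ENNReal.ofReal_pow (Real.exp_pos _).le, ← Real.exp_nat_mul,
            ← ENNReal.ofReal_mul (Real.exp_pos _).le, ← Real.exp_add]
  refine hfin.trans ?_
  have hexp : Real.exp (1 / 2) ≤ 2 := by
    have h1 : Real.exp (1 / 2) * Real.exp (1 / 2) = Real.exp 1 := by
      rw [← Real.exp_add]
      norm_num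
    have h2 := Real.exp_one_lt_d9
    nlinarith [Real.exp_pos (1 / 2)]
  set κ := b / (2 * (Real.sqrt 2 + c * Real.sqrt p) ^ 2) with hκ
  have hκ1 : κ ≤ b / (2 * (1 + b)) := by
    rw [hκ]
    have h1 : Real.sqrt 2 ^ 2 = 2 := Real.sq_sqrt (by norm_num)
    have h2 : (c * Real.sqrt p) ^ 2 = b := by
      rw [mul_pow, Real.sq_sqrt hp.le, hb]
      ring
    have h3 : 0 ≤ Real.sqrt 2 * (c * Real.sqrt p) := by positivity
    gcongr
    nlinarith
  have hmain : K + n * (-θ * G + θ ^ 2 / 2) =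
      -((n : ℝ) + 1) * (b / (2 * (1 + b))) * G ^ 2 + (θ * G - θ ^ 2 / 2) := by
    rw [hK, hθ]
    field_simp
    ring
  have hle : K + n * (-θ * G + θ ^ 2 / 2) ≤ 1 / 2 + -((n + 1 : ℕ) : ℝ) * κ * G ^ 2 := by
    rw [hmain]
    push_cast
    have h1 : ((n : ℝ) + 1) * G ^ 2 * κ ≤ ((n : ℝ) + 1) * G ^ 2 * (b / (2 * (1 + b))) := by
      gcongr
    have h2 : G ^ 2 ≤ 1 := by nlinarith
    nlinarith [sq_nonneg (θ - G)]
  calc _ ≤ Real.exp (1 / 2 + -((n + 1 : ℕ) : ℝ) * κ * G ^ 2) := Real.exp_le_exp.2 hle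
    _ = Real.exp (1 / 2) * Real.exp (-((n + 1 : ℕ) : ℝ) * κ * G ^ 2) := Real.exp_add _ _
    _ ≤ _ := mul_le_mul_of_nonneg_right hexp (Real.exp_pos _).le
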